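/- Fix integers n ≥ 1 and k with 1 ≤ k ≤ n, let x̃ ∈ ℝⁿ be k-sparse nonnegative, σ > 0 and C_w > 0. Then the map (g, h) ↦ ξ(σ, g, h, x̃) is Lipschitz on ℝᵐ × ℝⁿ with constant √(2·C_w² + σ²); that is, for all g⁽¹⁾, g⁽²⁾ ∈ ℝᵐ and h⁽¹⁾, h⁽²⁾ ∈ ℝⁿ: |ξ(σ, g⁽²⁾, h⁽²⁾, x̃) − ξ(σ, g⁽¹⁾, h⁽¹⁾, x̃)| ≤ √(2·C_w² + σ²)·√(‖g⁽²⁾ − g⁽¹⁾‖₂² + ‖h⁽²⁾ − h⁽¹⁾‖₂²). -/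

import Mathlib

noncomputable def e2norm {d : ℕ} (x : Fin d → ℝ) : ℝ := Real.sqrt (∑ i, x i ^ 2)

noncomputable def l1norm {d : ℕ} (x : Fin d → ℝ) : ℝ := ∑ i, |x i|

def kSparseNonneg (n k : ℕ) (x : Fin n → ℝ) : Prop :=
  (∀ i : Fin n, (i : ℕ) < n - k → x i = 0) ∧ ∀ i, 0 ≤ x i

/-- ξ(σ, g, h, x̃), the optimal value of the constrained minimization (2.11). -/
noncomputable def xiFun (m n : ℕ) (σ Cw : ℝ) (xt : Fin n → ℝ)
    (g : Fin m → ℝ) (h : Fin n → ℝ) : ℝ :=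
  sInf ((fun w : Fin n → ℝ =>
      Real.sqrt (e2norm w ^ 2 + σ ^ 2) * e2norm g + ∑ i, h i * w i) ''
    {w : Fin n → ℝ | e2norm w ≤ Cw ∧ l1norm (xt + w) ≤ l1norm xt})

/-!
The optimal values of two minimizations over the same set differ by at most the largest difference
of the objectives. At a fixed `w`, the objective depends on `g` through `√(‖w‖² + σ²) ‖g‖` and on
`h` through `⟪h, w⟫`, so it is Lipschitz in the two variables separately, with constants
`√(‖w‖² + σ²)` and `‖w‖`. By Cauchy–Schwarz in the plane it is then jointly Lipschitz with constant
`√(2 ‖w‖² + σ²)`.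
-/

open scoped RealInnerProductSpace

theorem csInf_image_le_csInf_image_add {ι α : Type*} [ConditionallyCompleteLattice α]
    [AddCommGroup α] [IsOrderedAddMonoid α] {s : Set ι} {f g : ι → α} {C : α}
    (hs : s.Nonempty) (hf : BddBelow (f '' s)) (hfg : ∀ i ∈ s, f i ≤ g i + C) :
    sInf (f '' s) ≤ sInf (g '' s) + C := by
  rw [← sub_le_iff_le_add]
  refine le_csInf (hs.image g) ?_
  rintro _ ⟨i, hi, rfl⟩
  rw [sub_le_iff_le_add]
  exact (csInf_le hf (Set.mem_image_of_mem f hi)).trans (hfg i hi)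

theorem abs_csInf_image_sub_csInf_image_le {ι α : Type*} [ConditionallyCompleteLinearOrder α]
    [AddCommGroup α] [IsOrderedAddMonoid α] {s : Set ι} {f g : ι → α} {C : α}
    (hs : s.Nonempty) (hf : BddBelow (f '' s)) (hg : BddBelow (g '' s))
    (hfg : ∀ i ∈ s, |f i - g i| ≤ C) :
    |sInf (f '' s) - sInf (g '' s)| ≤ C := by
  simp only [abs_sub_le_iff, sub_le_iff_le_add'] at hfg ⊢
  exact ⟨csInf_image_le_csInf_image_add hs hf fun i hi ↦ (hfg i hi).1,
    csInf_image_le_csInf_image_add hs hg fun i hi ↦ (hfg i hi).2⟩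

theorem mul_add_mul_le_sqrt_mul_sqrt (a b x y : ℝ) :
    a * x + b * y ≤ √(a ^ 2 + b ^ 2) * √(x ^ 2 + y ^ 2) := by
  simpa using Real.sum_mul_le_sqrt_mul_sqrt Finset.univ ![a, b] ![x, y]

section XiObjective

variable {E F : Type*} [SeminormedAddCommGroup E] [InnerProductSpace ℝ E]
  [SeminormedAddCommGroup F]

/-- The objective whose minimum over `w ∈ S_w(σ, x̃, C_w)` is `ξ(σ, g, h, x̃)`, with `ℝᵐ` and `ℝⁿ`
replaced by an arbitrary seminormed space `F` and inner product space `E`. -/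
noncomputable def xiObjective (σ : ℝ) (g : F) (h w : E) : ℝ :=
  √(‖w‖ ^ 2 + σ ^ 2) * ‖g‖ + ⟪h, w⟫

theorem abs_xiObjective_sub_le_mul_add_mul (σ : ℝ) (g₁ g₂ : F) (h₁ h₂ w : E) :
    |xiObjective σ g₂ h₂ w - xiObjective σ g₁ h₁ w| ≤
      √(‖w‖ ^ 2 + σ ^ 2) * ‖g₂ - g₁‖ + ‖w‖ * ‖h₂ - h₁‖ :=
  calc
    |xiObjective σ g₂ h₂ w - xiObjective σ g₁ h₁ w|
      = |√(‖w‖ ^ 2 + σ ^ 2) * (‖g₂‖ - ‖g₁‖) + ⟪h₂ - h₁, w⟫| := by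
        rw [xiObjective, xiObjective, inner_sub_left]
        ring_nf
    _ ≤ √(‖w‖ ^ 2 + σ ^ 2) * |‖g₂‖ - ‖g₁‖| + |⟪h₂ - h₁, w⟫| := by
        grw [abs_add_le, abs_mul, abs_of_nonneg (Real.sqrt_nonneg _)]
    _ ≤ √(‖w‖ ^ 2 + σ ^ 2) * ‖g₂ - g₁‖ + ‖w‖ * ‖h₂ - h₁‖ := by
        grw [abs_norm_sub_norm_le, abs_real_inner_le_norm, mul_comm ‖w‖]

theorem abs_xiObjective_sub_le (σ : ℝ) (g₁ g₂ : F) (h₁ h₂ w : E) :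
    |xiObjective σ g₂ h₂ w - xiObjective σ g₁ h₁ w| ≤
      √(2 * ‖w‖ ^ 2 + σ ^ 2) * √(‖g₂ - g₁‖ ^ 2 + ‖h₂ - h₁‖ ^ 2) := by
  have sq_add_sq : √(‖w‖ ^ 2 + σ ^ 2) ^ 2 + ‖w‖ ^ 2 = 2 * ‖w‖ ^ 2 + σ ^ 2 := by
    rw [Real.sq_sqrt (by positivity)]
    ring
  rw [← sq_add_sq]
  exact (abs_xiObjective_sub_le_mul_add_mul σ g₁ g₂ h₁ h₂ w).trans
    (mul_add_mul_le_sqrt_mul_sqrt _ _ _ _)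

theorem neg_norm_mul_norm_le_xiObjective (σ : ℝ) (g : F) (h w : E) :
    -(‖h‖ * ‖w‖) ≤ xiObjective σ g h w :=
  (neg_le_of_abs_le (abs_real_inner_le_norm h w)).trans
    (le_add_of_nonneg_left (by positivity))

theorem bddBelow_xiObjective_image {W : Set E} {C : ℝ} (hC : ∀ w ∈ W, ‖w‖ ≤ C)
    (σ : ℝ) (g : F) (h : E) : BddBelow (xiObjective σ g h '' W) := by
  refine ⟨-(‖h‖ * C), ?_⟩
  rintro _ ⟨w, hw, rfl⟩
  grw [← neg_norm_mul_norm_le_xiObjective, hC w hw]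

theorem abs_sInf_xiObjective_sub_le {W : Set E} {C : ℝ} (hW : W.Nonempty)
    (hC : ∀ w ∈ W, ‖w‖ ≤ C) (σ : ℝ) (g₁ g₂ : F) (h₁ h₂ : E) :
    |sInf (xiObjective σ g₂ h₂ '' W) - sInf (xiObjective σ g₁ h₁ '' W)| ≤
      √(2 * C ^ 2 + σ ^ 2) * √(‖g₂ - g₁‖ ^ 2 + ‖h₂ - h₁‖ ^ 2) := by
  refine abs_csInf_image_sub_csInf_image_le hW (bddBelow_xiObjective_image hC σ g₂ h₂)
    (bddBelow_xiObjective_image hC σ g₁ h₁) fun w hw ↦ ?_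
  grw [abs_xiObjective_sub_le, hC w hw]

end XiObjective

theorem e2norm_eq_norm_toLp {d : ℕ} (x : Fin d → ℝ) : e2norm x = ‖WithLp.toLp 2 x‖ := by
  simp only [e2norm, EuclideanSpace.norm_eq, Real.norm_eq_abs, sq_abs]

theorem xiFun_eq_sInf_xiObjective {m n : ℕ} (σ Cw : ℝ) (xt : Fin n → ℝ)
    (g : Fin m → ℝ) (h : Fin n → ℝ) :
    xiFun m n σ Cw xt g h =
      sInf (xiObjective σ (WithLp.toLp 2 g) (WithLp.toLp 2 h) ''
        (WithLp.toLp 2 '' {w | e2norm w ≤ Cw ∧ l1norm (xt + w) ≤ l1norm xt})) := by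
  simp only [xiFun, Set.image_image, xiObjective, e2norm_eq_norm_toLp, PiLp.inner_apply,
    Real.inner_apply]

theorem lasso_stmt5_general {m n : ℕ} (xt : Fin n → ℝ) (σ : ℝ) {Cw : ℝ} (hCw : 0 ≤ Cw)
    (g1 g2 : Fin m → ℝ) (h1 h2 : Fin n → ℝ) :
    |xiFun m n σ Cw xt g2 h2 - xiFun m n σ Cw xt g1 h1|
      ≤ √(2 * Cw ^ 2 + σ ^ 2) * √(e2norm (g2 - g1) ^ 2 + e2norm (h2 - h1) ^ 2) := by
  have zero_feasible : e2norm (0 : Fin n → ℝ) ≤ Cw ∧ l1norm (xt + 0) ≤ l1norm xt := by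
    simpa [e2norm] using hCw
  simp only [xiFun_eq_sInf_xiObjective, e2norm_eq_norm_toLp (_ - _), WithLp.toLp_sub]
  refine abs_sInf_xiObjective_sub_le (Set.Nonempty.image _ ⟨0, zero_feasible⟩) ?_ σ _ _ _ _
  rintro _ ⟨w, ⟨norm_le, -⟩, rfl⟩
  rwa [← e2norm_eq_norm_toLp]

theorem lasso_stmt5 (m n k : ℕ) (hn : 1 ≤ n) (hk1 : 1 ≤ k) (hkn : k ≤ n)
    (xt : Fin n → ℝ) (hxt : kSparseNonneg n k xt)
    (σ Cw : ℝ) (hσ : 0 < σ) (hCw : 0 < Cw) :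
    ∀ (g1 g2 : Fin m → ℝ) (h1 h2 : Fin n → ℝ),
      |xiFun m n σ Cw xt g2 h2 - xiFun m n σ Cw xt g1 h1|
        ≤ Real.sqrt (2 * Cw ^ 2 + σ ^ 2) *
            Real.sqrt (e2norm (g2 - g1) ^ 2 + e2norm (h2 - h1) ^ 2) :=
  lasso_stmt5_general xt σ hCw.le
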